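/- There exists a 2-(24,4,1) packing with 42 blocks whose leave is a vertex-disjoint union of four cycles of length 3 and three cycles of length 4, covering all 24 points (leave type 3^4 4^3). -/

import Mathlib

/-!
The packing is explicit. It is invariant under the permutation of order 3
`(0 3 6)(1 4 7)(2 5 8)(9 10 11)(12 16 20)(13 17 21)(14 18 22)(15 19 23)`,
which acts freely on the points, and it is the union of the 14 orbits, each of size 3, of its
blocks. The leave consists of the triangles `{3i, 3i+1, 3i+2}` for `i < 4` and the 4-cycles
`(12+4j, 13+4j, 14+4j, 15+4j)` for `j < 3`. All required properties are then finite checks: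
two distinct blocks meet in at most one point, and a pair of points is uncovered exactly
when it is an edge of one of these seven cycles.
-/

/-- A 2-(24,4,1) packing: a collection of 4-element blocks on 24 points such that
every pair of distinct points lies in at most one block. -/
def IsPacking (B : Finset (Finset (Fin 24))) : Prop :=
  (∀ b ∈ B, b.card = 4) ∧
  ∀ p q : Fin 24, p ≠ q → ∀ b₁ ∈ B, ∀ b₂ ∈ B,
    p ∈ b₁ → q ∈ b₁ → p ∈ b₂ → q ∈ b₂ → b₁ = b₂

/-- Adjacency in the leave of a packing: the pair of distinct points is covered by no block. -/
def LeaveAdj (B : Finset (Finset (Fin 24))) (p q : Fin 24) : Prop :=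
  p ≠ q ∧ ∀ b ∈ B, ¬ (p ∈ b ∧ q ∈ b)

/-- The leave of the packing `B` is a vertex-disjoint union of cycles whose lengths are
given by the list `L`, covering all 24 points. -/
def LeaveIsCycleType (B : Finset (Finset (Fin 24))) (L : List ℕ) : Prop :=
  ∃ f : (i : Fin L.length) → ZMod (L.get i) → Fin 24,
    Function.Bijective (fun x : Σ i : Fin L.length, ZMod (L.get i) => f x.1 x.2) ∧
    ∀ p q : Fin 24, LeaveAdj B p q ↔
      ∃ i k, (p = f i k ∧ q = f i (k + 1)) ∨ (q = f i k ∧ p = f i (k + 1))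

/-- The 42 blocks of the packing, each as a list of its points. -/
def blockList : List (List (Fin 24)) :=
  [[0, 3, 17, 23], [0, 4, 9, 21], [0, 5, 10, 20], [0, 6, 13, 19], [0, 7, 12, 16],
   [0, 8, 15, 18], [0, 11, 14, 22], [1, 3, 16, 20], [1, 4, 18, 23], [1, 5, 13, 15],
   [1, 6, 11, 17], [1, 7, 14, 19], [1, 8, 10, 21], [1, 9, 12, 22], [2, 3, 19, 22],
   [2, 4, 11, 13], [2, 5, 12, 18], [2, 6, 9, 16], [2, 7, 21, 23], [2, 8, 14, 20],
   [2, 10, 15, 17], [3, 6, 15, 21], [3, 7, 10, 13], [3, 8, 11, 12], [3, 9, 14, 18],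
   [4, 6, 12, 20], [4, 7, 15, 22], [4, 8, 17, 19], [4, 10, 14, 16], [5, 6, 14, 23],
   [5, 7, 9, 17], [5, 8, 16, 22], [5, 11, 19, 21], [6, 10, 18, 22], [7, 11, 18, 20],
   [8, 9, 13, 23], [9, 15, 19, 20], [10, 12, 19, 23], [11, 15, 16, 23], [12, 14, 17, 21],
   [13, 16, 18, 21], [13, 17, 20, 22]]

/-- The packing, as a set of blocks. -/
def blocks : Finset (Finset (Fin 24)) :=
  (blockList.map List.toFinset).toFinset

lemma mem_blocks {b : Finset (Fin 24)} :
    b ∈ blocks ↔ ∃ l ∈ blockList, l.toFinset = b := by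
  simp [blocks]

/-- The lengths of the cycles of the leave. -/
abbrev cycleLengths : List ℕ := [3, 3, 3, 3, 4, 4, 4]

instance (i : Fin cycleLengths.length) : NeZero (cycleLengths.get i) :=
  ⟨by revert i; decide⟩

/-- The cycles of the leave: the `i`-th one runs through consecutive points, starting at the
sum of the lengths of the preceding cycles. -/
def leaveCycle (i : Fin cycleLengths.length) (k : ZMod (cycleLengths.get i)) : Fin 24 :=
  Fin.ofNat 24 ((cycleLengths.take i).sum + k.val)

lemma blockList_inter_subsingleton : ∀ l₁ ∈ blockList, ∀ l₂ ∈ blockList, l₁ = l₂ ∨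
    ∀ p ∈ l₁, p ∈ l₂ → ∀ q ∈ l₁, q ∈ l₂ → p = q := by
  decide +kernel

lemma card_of_mem_blockList : ∀ l ∈ blockList, l.toFinset.card = 4 := by
  decide +kernel

lemma isPacking_blocks : IsPacking blocks := by
  constructor
  · intro b hb
    obtain ⟨l, hl, rfl⟩ := mem_blocks.mp hb
    exact card_of_mem_blockList l hl
  · intro p q hpq b₁ h₁ b₂ h₂ hp₁ hq₁ hp₂ hq₂
    obtain ⟨l₁, hl₁, rfl⟩ := mem_blocks.mp h₁
    obtain ⟨l₂, hl₂, rfl⟩ := mem_blocks.mp h₂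
    rw [List.mem_toFinset] at hp₁ hq₁ hp₂ hq₂
    rcases blockList_inter_subsingleton l₁ hl₁ l₂ hl₂ with h | h
    · rw [h]
    · exact absurd (h p hp₁ hp₂ q hq₁ hq₂) hpq

lemma card_blocks : blocks.card = 42 := by
  have hnodup : (blockList.map List.toFinset).Nodup := by decide +kernel
  rw [blocks, List.toFinset_card_of_nodup hnodup]
  rfl

lemma leaveCycle_bijective : Function.Bijective
    (fun x : Σ i : Fin cycleLengths.length, ZMod (cycleLengths.get i) =>
      leaveCycle x.1 x.2) := by
  constructor
  · have h : ∀ i k j l, leaveCycle i k = leaveCycle j l →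
        (⟨i, k⟩ : Σ i : Fin cycleLengths.length, ZMod (cycleLengths.get i)) = ⟨j, l⟩ := by
      decide +kernel
    rintro ⟨i, k⟩ ⟨j, l⟩ hij
    exact h i k j l hij
  · have h : ∀ p, ∃ i k, leaveCycle i k = p := by decide +kernel
    intro p
    obtain ⟨i, k, hp⟩ := h p
    exact ⟨⟨i, k⟩, hp⟩

lemma leaveAdj_blocks_iff : ∀ p q : Fin 24, LeaveAdj blocks p q ↔
    ∃ i k, (p = leaveCycle i k ∧ q = leaveCycle i (k + 1)) ∨
      (q = leaveCycle i k ∧ p = leaveCycle i (k + 1)) := by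
  have h : ∀ p q : Fin 24, (p ≠ q ∧ ∀ l ∈ blockList, ¬ (p ∈ l ∧ q ∈ l)) ↔
      ∃ i k, (p = leaveCycle i k ∧ q = leaveCycle i (k + 1)) ∨
        (q = leaveCycle i k ∧ p = leaveCycle i (k + 1)) := by
    decide +kernel
  intro p q
  rw [← h p q]
  simp [LeaveAdj, mem_blocks]

/-- There is a 2-(24,4,1) packing with 42 blocks whose leave is a vertex-disjoint
union of cycles of lengths [3, 3, 3, 3, 4, 4, 4], covering all 24 points. -/
theorem exists_max_packing_with_leave_type :
    ∃ B : Finset (Finset (Fin 24)), IsPacking B ∧ B.card = 42 ∧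
      LeaveIsCycleType B [3, 3, 3, 3, 4, 4, 4] :=
  ⟨blocks, isPacking_blocks, card_blocks,
    leaveCycle, leaveCycle_bijective, leaveAdj_blocks_iff⟩
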